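/- Let H = {rrb, bbr, rby} (the patterns: a triangle with two red edges and one blue edge, a triangle with two blue edges and one red edge, and a rainbow triangle with one edge of each color). Then for every integer n ≥ 3, h_2(n, H) = ⌈n/2⌉ + 1. -/

import Mathlib

/-- The three edge colors: red, blue, yellow. -/
inductive Col : Type
  | r | b | y
  deriving DecidableEq

/-- A (symmetric) 3-edge-coloring of the complete graph `K_n` on vertex set `Fin n`. -/
structure Coloring (n : ℕ) where
  col : Fin n → Fin n → Col
  symm : ∀ i j, col i j = col j i

/-- The pattern (multiset of edge colors) of the triangle on vertices `u, v, w`. -/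
def triPattern {n : ℕ} (c : Coloring n) (u v w : Fin n) : Multiset Col :=
  {c.col u v, c.col v w, c.col u w}

/-- The coloring `c` contains the pattern `P`: some triangle has color multiset `P`. -/
def Contains {n : ℕ} (c : Coloring n) (P : Multiset Col) : Prop :=
  ∃ u v w : Fin n, u ≠ v ∧ v ≠ w ∧ u ≠ w ∧ triPattern c u v w = P

/-- The coloring `c` avoids every pattern in the family `H`. -/
def Avoids {n : ℕ} (c : Coloring n) (H : Set (Multiset Col)) : Prop :=
  ∀ P ∈ H, ¬ Contains c P

/-- A vertex set `S` is two-colored under `c`: the edges inside `S` use at most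
two of the three colors, i.e. some color is missing on the edges inside `S`. -/
def TwoColored {n : ℕ} (c : Coloring n) (S : Finset (Fin n)) : Prop :=
  ∃ x : Col, ∀ i ∈ S, ∀ j ∈ S, i ≠ j → c.col i j ≠ x

/-- `h2 c` is the maximum size of a vertex set whose induced edges use at most
two of the three colors. -/
noncomputable def h2 {n : ℕ} (c : Coloring n) : ℕ :=
  sSup {k | ∃ S : Finset (Fin n), TwoColored c S ∧ S.card = k}

/-- `h2n n H = min { h2 c : c a 3-edge-coloring of K_n avoiding all patterns in H }`. -/
noncomputable def h2n (n : ℕ) (H : Set (Multiset Col)) : ℕ :=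
  sInf {m | ∃ c : Coloring n, Avoids c H ∧ h2 c = m}

/-- Pattern abbreviations. -/
def Prrr : Multiset Col := {Col.r, Col.r, Col.r}
def Pbbb : Multiset Col := {Col.b, Col.b, Col.b}
def Pyyy : Multiset Col := {Col.y, Col.y, Col.y}
def Prrb : Multiset Col := {Col.r, Col.r, Col.b}
def Prry : Multiset Col := {Col.r, Col.r, Col.y}
def Pbbr : Multiset Col := {Col.b, Col.b, Col.r}
def Pbby : Multiset Col := {Col.b, Col.b, Col.y}
def Pyyr : Multiset Col := {Col.y, Col.y, Col.r}
def Pyyb : Multiset Col := {Col.y, Col.y, Col.b}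
def Prby : Multiset Col := {Col.r, Col.b, Col.y}

/-!
A coloring avoids `rrb`, `bbr` and `rby` exactly when no vertex meets both a red and a blue edge.
Every vertex is then red-free or blue-free, so one of these two classes has at least `⌈n/2⌉`
vertices. A class of vertices meeting no edge of color `x` stays free of `x` after adding any single
vertex, which gives the extra `1`. A red clique and a blue clique of nearly equal sizes, joined by
yellow edges, attain the bound: a two-colored set meets one of the cliques in at most one vertex, or
lies inside one of them.
-/

section

variable {n : ℕ} {c : Coloring n}

theorem h2_le_iff {k : ℕ} : h2 c ≤ k ↔ ∀ S, TwoColored c S → S.card ≤ k := by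
  have hbdd : BddAbove {k | ∃ S : Finset (Fin n), TwoColored c S ∧ S.card = k} := by
    refine ⟨Fintype.card (Fin n), ?_⟩
    rintro _ ⟨S, -, rfl⟩
    exact S.card_le_univ
  have hempty : TwoColored c ∅ := ⟨Col.r, by simp⟩
  rw [h2, csSup_le_iff hbdd ⟨_, ∅, hempty, rfl⟩]
  simp

theorem TwoColored.card_le_h2 {S : Finset (Fin n)} (hS : TwoColored c S) : S.card ≤ h2 c :=
  h2_le_iff.1 le_rfl S hS

theorem avoids_iff_red_blue_not_incident :
    Avoids c {Prrb, Pbbr, Prby} ↔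
      ∀ u v w, u ≠ v → u ≠ w → c.col u v = Col.r → c.col u w ≠ Col.b := by
  constructor
  · intro hc u v w huv huw hr hb
    have hvw : v ≠ w := by
      rintro rfl
      simp [hr] at hb
    have hmem : triPattern c v u w ∈ ({Prrb, Pbbr, Prby} : Set (Multiset Col)) := by
      rw [triPattern, c.symm v u, hr, hb]
      generalize c.col v w = x
      cases x
      · exact .inl (by decide)
      · exact .inr (.inl (by decide))
      · exact .inr (.inr (by decide))
    exact hc _ hmem ⟨v, u, w, huv.symm, huw, hvw, rfl⟩
  · rintro h P hP ⟨u, v, w, huv, hvw, huw, rfl⟩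
    have hmem : Col.r ∈ triPattern c u v w ∧ Col.b ∈ triPattern c u v w := by
      rcases hP with hP | hP | hP <;> rw [hP] <;> decide
    simp only [triPattern, Multiset.insert_eq_cons, Multiset.mem_cons,
      Multiset.mem_singleton] at hmem
    -- A red and a blue edge of the triangle share one of its three vertices.
    grind [c.symm u v, c.symm v w, c.symm u w]

/-- The vertices incident with no edge of color `x`. Adding one vertex to this set still leaves
the color `x` missing, which produces large two-colored sets. -/
def colorFree (c : Coloring n) (x : Col) : Finset (Fin n) :=
  {u | ∀ v, u ≠ v → c.col u v ≠ x}

theorem mem_colorFree {x : Col} {u : Fin n} :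
    u ∈ colorFree c x ↔ ∀ v, u ≠ v → c.col u v ≠ x := by
  simp [colorFree]

theorem twoColored_insert_colorFree (c : Coloring n) (x : Col) (w : Fin n) :
    TwoColored c (insert w (colorFree c x)) := by
  refine ⟨x, fun i hi j hj hij => ?_⟩
  rcases Finset.mem_insert.1 hi with rfl | hi
  · have hj : j ∈ colorFree c x := Finset.mem_of_mem_insert_of_ne hj hij.symm
    rw [c.symm]
    exact mem_colorFree.1 hj i hij.symm
  · exact mem_colorFree.1 hi j hij

theorem min_card_colorFree_add_one_le_h2 (c : Coloring n) (x : Col) :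
    min n ((colorFree c x).card + 1) ≤ h2 c := by
  by_cases hfree : ∀ w, w ∈ colorFree c x
  · have huniv : TwoColored c Finset.univ := ⟨x, fun i _ j _ => mem_colorFree.1 (hfree i) j⟩
    exact min_le_of_left_le (by simpa using huniv.card_le_h2)
  · obtain ⟨w, hw⟩ := not_forall.1 hfree
    rw [← Finset.card_insert_of_notMem hw]
    exact min_le_of_right_le (twoColored_insert_colorFree c x w).card_le_h2

theorem Avoids.colorFree_union_eq_univ (hc : Avoids c {Prrb, Pbbr, Prby}) :
    colorFree c Col.r ∪ colorFree c Col.b = Finset.univ := by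
  refine Finset.eq_univ_of_forall fun u => ?_
  rw [Finset.mem_union, mem_colorFree, mem_colorFree]
  by_contra! ⟨⟨v, huv, hr⟩, w, huw, hb⟩
  exact avoids_iff_red_blue_not_incident.1 hc u v w huv huw hr hb

theorem Avoids.half_add_one_le_h2 (hn : 2 ≤ n) (hc : Avoids c {Prrb, Pbbr, Prby}) :
    (n + 1) / 2 + 1 ≤ h2 c := by
  have hsum : n ≤ (colorFree c Col.r).card + (colorFree c Col.b).card := by
    simpa [hc.colorFree_union_eq_univ] using
      Finset.card_union_le (colorFree c Col.r) (colorFree c Col.b)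
  have hred := min_card_colorFree_add_one_le_h2 c Col.r
  have hblue := min_card_colorFree_add_one_le_h2 c Col.b
  omega

/-- The coloring made of a red clique on `A` and a blue clique on the complement of `A`, with
yellow edges in between. It is the extremal coloring when `A` contains half of the vertices. -/
def twoCliques (A : Finset (Fin n)) : Coloring n where
  col i j := if i ∈ A then if j ∈ A then Col.r else Col.y else if j ∈ A then Col.y else Col.b
  symm i j := by split_ifs <;> rfl

section twoCliques

variable {A : Finset (Fin n)} {i j : Fin n}

theorem twoCliques_col_eq_r : (twoCliques A).col i j = Col.r ↔ i ∈ A ∧ j ∈ A := by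
  grind [twoCliques]

theorem twoCliques_col_eq_b : (twoCliques A).col i j = Col.b ↔ i ∉ A ∧ j ∉ A := by
  grind [twoCliques]

theorem twoCliques_col_eq_y : (twoCliques A).col i j = Col.y ↔ (i ∈ A ↔ j ∉ A) := by
  grind [twoCliques]

end twoCliques

theorem avoids_twoCliques (A : Finset (Fin n)) : Avoids (twoCliques A) {Prrb, Pbbr, Prby} :=
  avoids_iff_red_blue_not_incident.2 fun _ _ _ _ _ hr hb =>
    (twoCliques_col_eq_b.1 hb).1 (twoCliques_col_eq_r.1 hr).1

theorem h2_twoCliques_le (A : Finset (Fin n)) :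
    h2 (twoCliques A) ≤ max A.card Aᶜ.card + 1 := by
  refine h2_le_iff.2 ?_
  rintro S ⟨x, hx⟩
  have hsplit : (S ∩ A).card + (S ∩ Aᶜ).card = S.card := by
    rw [← Finset.sdiff_eq_inter_compl, Finset.card_inter_add_card_sdiff]
  have hA : (S ∩ A).card ≤ A.card := Finset.card_le_card Finset.inter_subset_right
  have hAc : (S ∩ Aᶜ).card ≤ Aᶜ.card := Finset.card_le_card Finset.inter_subset_right
  cases x with
  | r =>
    have hone : (S ∩ A).card ≤ 1 := Finset.card_le_one.2 fun i hi j hj => by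
      rw [Finset.mem_inter] at hi hj
      by_contra hij
      exact hx i hi.1 j hj.1 hij (twoCliques_col_eq_r.2 ⟨hi.2, hj.2⟩)
    omega
  | b =>
    have hone : (S ∩ Aᶜ).card ≤ 1 := Finset.card_le_one.2 fun i hi j hj => by
      rw [Finset.mem_inter, Finset.mem_compl] at hi hj
      by_contra hij
      exact hx i hi.1 j hj.1 hij (twoCliques_col_eq_b.2 ⟨hi.2, hj.2⟩)
    omega
  | y =>
    have hside : S ∩ A = ∅ ∨ S ∩ Aᶜ = ∅ := by
      by_contra! ⟨⟨i, hi⟩, j, hj⟩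
      rw [Finset.mem_inter] at hi hj
      have hjA : j ∉ A := Finset.mem_compl.1 hj.2
      exact hx i hi.1 j hj.1 (ne_of_mem_of_not_mem hi.2 hjA)
        (twoCliques_col_eq_y.2 (iff_of_true hi.2 hjA))
    rcases hside with h | h <;> rw [h, Finset.card_empty] at hsplit <;> omega

theorem exists_avoids_h2_le (n : ℕ) :
    ∃ c : Coloring n, Avoids c {Prrb, Pbbr, Prby} ∧ h2 c ≤ (n + 1) / 2 + 1 := by
  obtain ⟨A, hA⟩ : ∃ A : Finset (Fin n), A.card = n / 2 := by
    obtain ⟨A, -, hA⟩ := Finset.exists_subset_card_eq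
      (s := (Finset.univ : Finset (Fin n))) (n := n / 2) (by simpa using Nat.div_le_self n 2)
    exact ⟨A, hA⟩
  have hAc : Aᶜ.card = n - n / 2 := by rw [Finset.card_compl, hA, Fintype.card_fin]
  refine ⟨twoCliques A, avoids_twoCliques A, (h2_twoCliques_le A).trans ?_⟩
  omega

end

theorem stmt10 (n : ℕ) (hn : 3 ≤ n) :
    h2n n {Prrb, Pbbr, Prby} = (n + 1) / 2 + 1 := by
  have hlower {c : Coloring n} (hc : Avoids c {Prrb, Pbbr, Prby}) : (n + 1) / 2 + 1 ≤ h2 c :=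
    hc.half_add_one_le_h2 (by omega)
  obtain ⟨c, hc, hle⟩ := exists_avoids_h2_le n
  refine IsLeast.csInf_eq ⟨⟨c, hc, hle.antisymm (hlower hc)⟩, ?_⟩
  rintro _ ⟨d, hd, rfl⟩
  exact hlower hd
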